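/- Let d, k be positive integers, Q ∈ ℝ^{d×d}, S : ℝ^d → ℝ^{d×d} Lipschitz continuous with constant L_S, h > 0, C > 0, and q ≥ 1 a real number. Let y, y^{(0)}, y^{(1)}, …, y^{(k)} : [0, h] → ℝ^d be continuous with y(t) = y(0) + ∫₀ᵗ S(y(r)) Q y(r) dr, y^{(j)}(0) = y(0), and y^{(j)}(t) = y(0) + ∫₀ᵗ S(y^{(j-1)}(r)) Q y^{(j)}(r) dr for each j ∈ {1,…,k} and all t ∈ [0, h]. Set C_y = sup_{t∈[0,h]} ‖y(t)‖ and M^{(j-1)} = sup_{t∈[0,h]} ‖S(y^{(j-1)}(t))‖₂. Suppose sup_{t∈[0,h]} ‖y^{(0)}(t) − y(t)‖ ≤ C h^q and 2 h M^{(j-1)} ‖Q‖₂ ≤ 1 for every j ∈ {1,…,k}. Then for each j ∈ {1,…,k}, sup_{t∈[0,h]} ‖y^{(j)}(t) − y(t)‖ ≤ (2 L_S ‖Q‖₂ C_y)^j C h^{q+j}. -/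

import Mathlib

/-!
Fix `j` and put `e = Y j - y`. Subtracting the two integral equations and splitting
`S(Y (j-1)) Q (Y j) - S(y) Q y = S(Y (j-1)) Q e + (S(Y (j-1)) - S(y)) Q y`
bounds the integrand by `M ‖Q‖ ‖e‖ + L_S ε ‖Q‖ C_y`, where `ε` bounds `‖Y (j-1) - y‖`.
At a point where `‖e‖` attains its maximum, the first term contributes at most half of that
maximum since `2 h M ‖Q‖ ≤ 1`, so it can be absorbed in the left-hand side
(`norm_le_of_integral_absorb`); this leaves `‖e‖ ≤ 2 h L_S ‖Q‖ C_y ε`. Each iteration thus gains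
a factor `2 L_S ‖Q‖ C_y h`, and the estimate follows by induction on `j`.
-/

open scoped RealInnerProductSpace
open Set MeasureTheory intervalIntegral Filter

/-- Action of a matrix on a vector of the Euclidean space `ℝ^d`. -/
noncomputable def matVec {d : ℕ} (M : Matrix (Fin d) (Fin d) ℝ)
    (x : EuclideanSpace ℝ (Fin d)) : EuclideanSpace ℝ (Fin d) :=
  Matrix.toEuclideanLin M x

/-- The spectral norm `‖M‖₂` of a matrix: the operator norm induced by the Euclidean norm. -/
noncomputable def matNorm2 {d : ℕ} (M : Matrix (Fin d) (Fin d) ℝ) : ℝ :=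
  ‖LinearMap.toContinuousLinearMap (Matrix.toEuclideanLin M)‖

/-- The maximum absolute row-sum norm `‖A‖_∞` of a matrix. -/
noncomputable def rowSumNorm {s : ℕ} (A : Matrix (Fin s) (Fin s) ℝ) : ℝ :=
  ⨆ i, ∑ j, abs (A i j)

/-- The continuous linear map `x ↦ M x` on `ℝ^d`, whose norm is by definition `matNorm2 M`. -/
noncomputable def matCLM {d : ℕ} (M : Matrix (Fin d) (Fin d) ℝ) :
    EuclideanSpace ℝ (Fin d) →L[ℝ] EuclideanSpace ℝ (Fin d) :=
  LinearMap.toContinuousLinearMap (Matrix.toEuclideanLin M)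

theorem matCLM_sub {d : ℕ} (M N : Matrix (Fin d) (Fin d) ℝ) :
    matCLM (M - N) = matCLM M - matCLM N := by
  simp [matCLM]

theorem norm_matVec_le {d : ℕ} (M : Matrix (Fin d) (Fin d) ℝ) (x : EuclideanSpace ℝ (Fin d)) :
    ‖matVec M x‖ ≤ matNorm2 M * ‖x‖ :=
  (matCLM M).le_opNorm x

theorem matNorm2_nonneg {d : ℕ} (M : Matrix (Fin d) (Fin d) ℝ) : 0 ≤ matNorm2 M :=
  norm_nonneg (matCLM M)

theorem continuous_matCLM_of_lipschitz {d : ℕ}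
    {S : EuclideanSpace ℝ (Fin d) → Matrix (Fin d) (Fin d) ℝ} {LS : ℝ}
    (hLip : ∀ x y : EuclideanSpace ℝ (Fin d), matNorm2 (S x - S y) ≤ LS * ‖x - y‖) :
    Continuous fun x => matCLM (S x) := by
  refine (LipschitzWith.of_dist_le_mul (K := LS.toNNReal) fun x y => ?_).continuous
  rw [dist_eq_norm, dist_eq_norm, ← matCLM_sub]
  exact (hLip x y).trans
    (mul_le_mul_of_nonneg_right (Real.le_coe_toNNReal LS) (norm_nonneg _))

/-- In positive dimension the Lipschitz condition has content, so the constant is nonnegative. -/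
theorem lipschitz_const_nonneg {d : ℕ} (hd : 0 < d)
    {S : EuclideanSpace ℝ (Fin d) → Matrix (Fin d) (Fin d) ℝ} {LS : ℝ}
    (hLip : ∀ x y : EuclideanSpace ℝ (Fin d), matNorm2 (S x - S y) ≤ LS * ‖x - y‖) :
    0 ≤ LS := by
  have h1 := (matNorm2_nonneg _).trans (hLip (EuclideanSpace.single ⟨0, hd⟩ 1) 0)
  simpa using h1

theorem norm_le_iSup_Icc {E : Type*} [SeminormedAddCommGroup E] {h : ℝ} {f : ℝ → E}
    (hf : ContinuousOn f (Set.Icc 0 h)) {t : ℝ} (ht : t ∈ Set.Icc (0:ℝ) h) :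
    ‖f t‖ ≤ ⨆ s : Set.Icc (0:ℝ) h, ‖f s‖ := by
  have hb : BddAbove (Set.range fun s : Set.Icc (0:ℝ) h => ‖f s‖) := by
    have h1 := (isCompact_Icc.image_of_continuousOn hf.norm).bddAbove
    rwa [Set.image_eq_range] at h1
  exact le_ciSup hb ⟨t, ht⟩

/-- A Gronwall-type bound: on an interval so short that `h m ≤ 1/2`, evaluating at a maximum
point of `‖e‖` lets the term `m ‖e‖` be absorbed. -/
theorem norm_le_of_integral_absorb {E : Type*} [NormedAddCommGroup E] [NormedSpace ℝ E]
    {h m K : ℝ} (hh : 0 ≤ h) (hm : 0 ≤ m) (hK : 0 ≤ K) (hhm : 2 * h * m ≤ 1) {e f : ℝ → E}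
    (hec : ContinuousOn e (Set.Icc 0 h))
    (he : ∀ t ∈ Set.Icc (0:ℝ) h, e t = ∫ r in (0:ℝ)..t, f r)
    (hf : ∀ t ∈ Set.Icc (0:ℝ) h, ‖f t‖ ≤ m * ‖e t‖ + K) :
    ∀ t ∈ Set.Icc (0:ℝ) h, ‖e t‖ ≤ 2 * h * K := by
  obtain ⟨s, hs, hmax⟩ := isCompact_Icc.exists_isMaxOn
    (Set.nonempty_Icc.2 hh) hec.norm
  have hmax' : ∀ r ∈ Set.Icc (0:ℝ) h, ‖e r‖ ≤ ‖e s‖ := fun r hr => hmax hr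
  have h1 : ‖e s‖ ≤ (m * ‖e s‖ + K) * |s - 0| := by
    conv_lhs => rw [he s hs]
    refine intervalIntegral.norm_integral_le_of_norm_le_const fun r hr => ?_
    rw [Set.uIoc_of_le hs.1] at hr
    have hr' : r ∈ Set.Icc (0:ℝ) h := ⟨hr.1.le, hr.2.trans hs.2⟩
    exact (hf r hr').trans (by gcongr; exact hmax' r hr')
  rw [sub_zero, abs_of_nonneg hs.1] at h1
  have h2 : (m * ‖e s‖ + K) * s ≤ (m * ‖e s‖ + K) * h := by
    gcongr
    exact hs.2
  have h3 := mul_le_mul_of_nonneg_right hhm (norm_nonneg (e s))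
  intro t ht
  linarith [hmax' t ht]

/-- One iteration: if `u` is within `ε` of the exact solution `y`, then the solution `v` of
`v' = S(u) Q v` is within `2 L_S ‖Q‖ C_y h ε` of `y`. -/
theorem semiImplicit_step {d : ℕ} (hd : 0 < d)
    (Q : Matrix (Fin d) (Fin d) ℝ)
    (S : EuclideanSpace ℝ (Fin d) → Matrix (Fin d) (Fin d) ℝ)
    (LS : ℝ) (hLip : ∀ x y : EuclideanSpace ℝ (Fin d), matNorm2 (S x - S y) ≤ LS * ‖x - y‖)
    (h : ℝ) (hh : 0 < h) (y u v : ℝ → EuclideanSpace ℝ (Fin d)) (ε : ℝ)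
    (hyc : ContinuousOn y (Set.Icc 0 h)) (huc : ContinuousOn u (Set.Icc 0 h))
    (hvc : ContinuousOn v (Set.Icc 0 h))
    (hy : ∀ t ∈ Set.Icc (0:ℝ) h,
      y t = y 0 + ∫ r in (0:ℝ)..t, matVec (S (y r)) (matVec Q (y r)))
    (hv : ∀ t ∈ Set.Icc (0:ℝ) h,
      v t = y 0 + ∫ r in (0:ℝ)..t, matVec (S (u r)) (matVec Q (v r)))
    (hu : ∀ t ∈ Set.Icc (0:ℝ) h, ‖u t - y t‖ ≤ ε)
    (hM : 2 * h * (⨆ t : Set.Icc (0:ℝ) h, matNorm2 (S (u ↑t))) * matNorm2 Q ≤ 1) :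
    ∀ t ∈ Set.Icc (0:ℝ) h, ‖v t - y t‖ ≤
      (2 * LS * matNorm2 Q * (⨆ t : Set.Icc (0:ℝ) h, ‖y ↑t‖)) * h * ε := by
  set Cy := ⨆ t : Set.Icc (0:ℝ) h, ‖y ↑t‖
  set M := ⨆ t : Set.Icc (0:ℝ) h, matNorm2 (S (u ↑t))
  have hLS := lipschitz_const_nonneg hd hLip
  have hSc := continuous_matCLM_of_lipschitz hLip
  have h0 : (0:ℝ) ∈ Set.Icc (0:ℝ) h := ⟨le_rfl, hh.le⟩
  have hCy : ∀ t ∈ Set.Icc (0:ℝ) h, ‖y t‖ ≤ Cy := fun t ht => norm_le_iSup_Icc hyc ht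
  have hMu : ∀ t ∈ Set.Icc (0:ℝ) h, matNorm2 (S (u t)) ≤ M := fun t ht =>
    norm_le_iSup_Icc (hSc.comp_continuousOn huc) ht
  have hCy0 : 0 ≤ Cy := (norm_nonneg _).trans (hCy 0 h0)
  have hM0 : 0 ≤ M := (matNorm2_nonneg _).trans (hMu 0 h0)
  have hε : 0 ≤ ε := (norm_nonneg _).trans (hu 0 h0)
  have hQ := matNorm2_nonneg Q
  have hint : ∀ a b : ℝ → EuclideanSpace ℝ (Fin d), ContinuousOn a (Set.Icc 0 h) →
      ContinuousOn b (Set.Icc 0 h) → ∀ t ∈ Set.Icc (0:ℝ) h,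
      IntervalIntegrable (fun r => matVec (S (a r)) (matVec Q (b r))) volume 0 t := by
    intro a b ha hb t ht
    have hc : ContinuousOn (fun r => matCLM (S (a r)) (matCLM Q (b r))) (Set.Icc 0 h) :=
      (hSc.comp_continuousOn ha).clm_apply ((matCLM Q).continuous.comp_continuousOn hb)
    refine ContinuousOn.intervalIntegrable (hc.mono ?_)
    rw [Set.uIcc_of_le ht.1]
    exact Set.Icc_subset_Icc_right ht.2
  have key := norm_le_of_integral_absorb (e := fun t => v t - y t)
    (f := fun r => matVec (S (u r)) (matVec Q (v r)) - matVec (S (y r)) (matVec Q (y r)))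
    (m := M * matNorm2 Q) (K := LS * ε * (matNorm2 Q * Cy)) hh.le (by positivity) (by positivity)
    (by linarith) (hvc.sub hyc) ?_ ?_
  · intro t ht
    calc _ ≤ _ := key t ht
      _ = _ := by ring
  · intro t ht
    rw [intervalIntegral.integral_sub (hint u v huc hvc t ht) (hint y y hyc hyc t ht)]
    conv_lhs => rw [hv t ht, hy t ht]
    abel
  · intro t ht
    have hsplit : matVec (S (u t)) (matVec Q (v t)) - matVec (S (y t)) (matVec Q (y t)) =
        matVec (S (u t)) (matVec Q (v t - y t)) +
          matVec (S (u t) - S (y t)) (matVec Q (y t)) := by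
      simp [matVec]
    rw [hsplit]
    have h1 : ‖matVec (S (u t)) (matVec Q (v t - y t))‖ ≤ M * (matNorm2 Q * ‖v t - y t‖) :=
      (norm_matVec_le _ _).trans
        (mul_le_mul (hMu t ht) (norm_matVec_le _ _) (norm_nonneg _) hM0)
    have h2 : ‖matVec (S (u t) - S (y t)) (matVec Q (y t))‖ ≤
        LS * ε * (matNorm2 Q * Cy) :=
      (norm_matVec_le _ _).trans (mul_le_mul
        ((hLip _ _).trans (mul_le_mul_of_nonneg_left (hu t ht) hLS))
        ((norm_matVec_le _ _).trans (mul_le_mul_of_nonneg_left (hCy t ht) hQ))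
        (norm_nonneg _) (by positivity))
    calc _ ≤ _ := norm_add_le _ _
      _ ≤ _ := add_le_add h1 h2
      _ = _ := by ring

/-- Error estimate for the chained semi-implicit system
`ẏ^{(j)} = S(y^{(j-1)}) Q y^{(j)}` (`j = 1, …, k`) with common initial value: if
`‖y^{(0)} − y‖ ≤ C h^q` and `2 h M^{(j-1)} ‖Q‖₂ ≤ 1` for every `j ∈ {1,…,k}`, then
`‖y^{(j)} − y‖ ≤ (2 L_S ‖Q‖₂ C_y)^j C h^{q+j}` on `[0, h]` for each `j ∈ {1,…,k}`. -/
theorem semiImplicit_chained_error_estimate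
    (d k : ℕ) (hd : 0 < d) (hk : 0 < k)
    (Q : Matrix (Fin d) (Fin d) ℝ)
    (S : EuclideanSpace ℝ (Fin d) → Matrix (Fin d) (Fin d) ℝ)
    (LS : ℝ) (hLip : ∀ x y : EuclideanSpace ℝ (Fin d), matNorm2 (S x - S y) ≤ LS * ‖x - y‖)
    (h : ℝ) (hh : 0 < h) (C : ℝ) (hC : 0 < C) (q : ℝ) (hq : 1 ≤ q)
    (y : ℝ → EuclideanSpace ℝ (Fin d)) (Y : ℕ → ℝ → EuclideanSpace ℝ (Fin d))
    (hyc : ContinuousOn y (Set.Icc 0 h))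
    (hYc : ∀ j ≤ k, ContinuousOn (Y j) (Set.Icc 0 h))
    (hy : ∀ t ∈ Set.Icc (0:ℝ) h,
      y t = y 0 + ∫ r in (0:ℝ)..t, matVec (S (y r)) (matVec Q (y r)))
    (hY0 : ∀ j ≤ k, Y j 0 = y 0)
    (hYrec : ∀ j, 1 ≤ j → j ≤ k → ∀ t ∈ Set.Icc (0:ℝ) h,
      Y j t = y 0 + ∫ r in (0:ℝ)..t, matVec (S (Y (j - 1) r)) (matVec Q (Y j r)))
    (hinit : ∀ t ∈ Set.Icc (0:ℝ) h, ‖Y 0 t - y t‖ ≤ C * h ^ q)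
    (hM : ∀ j, 1 ≤ j → j ≤ k →
      2 * h * (⨆ t : Set.Icc (0:ℝ) h, matNorm2 (S (Y (j - 1) ↑t))) * matNorm2 Q ≤ 1) :
    ∀ j, 1 ≤ j → j ≤ k → ∀ t ∈ Set.Icc (0:ℝ) h,
      ‖Y j t - y t‖ ≤
        (2 * LS * matNorm2 Q * (⨆ t : Set.Icc (0:ℝ) h, ‖y ↑t‖)) ^ j * C *
          h ^ (q + (j : ℝ)) := by
  have main : ∀ j ≤ k, ∀ t ∈ Set.Icc (0:ℝ) h, ‖Y j t - y t‖ ≤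
      (2 * LS * matNorm2 Q * (⨆ t : Set.Icc (0:ℝ) h, ‖y ↑t‖)) ^ j * C * h ^ (q + (j : ℝ)) := by
    intro j
    induction j with
    | zero => simpa using hinit
    | succ j ih =>
      intro hj t ht
      have hM' := hM (j + 1) (by omega) hj
      have hrec := hYrec (j + 1) (by omega) hj
      rw [Nat.add_sub_cancel] at hM' hrec
      refine (semiImplicit_step hd Q S LS hLip h hh y (Y j) (Y (j + 1)) _ hyc
        (hYc j (by omega)) (hYc (j + 1) hj) hy hrec (ih (by omega)) hM' t ht).trans_eq ?_
      rw [Nat.cast_succ, ← add_assoc, Real.rpow_add_one hh.ne']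
      ring
  exact fun j _ hj => main j hj
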